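/- Let Γ be a discrete group. Suppose there exist ε > 0 and a net (f_i)_{i∈I} of finitely supported positive-definite functions on Γ with f_i(e) = 1, such that for every g ∈ Γ there is i₀ ∈ I with: for all i ≥ i₀, the number f_i(g) is real and f_i(g) ≥ ε. Then Γ is amenable, i.e., there exists a left-invariant mean on ℓ∞(Γ): a linear functional m : ℓ∞(Γ, ℝ) → ℝ with m(f) ≥ 0 whenever f ≥ 0, m(1) = 1, and m(f(g⁻¹ ·)) = m(f) for every g ∈ Γ and f ∈ ℓ∞(Γ, ℝ). -/

import Mathlib

open scoped ComplexOrder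

/-- A function `f : Γ → ℂ` on a group is positive-definite if all the matrices
`[f(g_k⁻¹ g_j)]` are positive semi-definite. -/
def IsPosDefFn {Γ : Type} [Group Γ] (f : Γ → ℂ) : Prop :=
  ∀ (n : ℕ) (g : Fin n → Γ) (c : Fin n → ℂ),
    0 ≤ ∑ j, ∑ k, c j * (starRingEnd ℂ) (c k) * f ((g k)⁻¹ * g j)

/-!
The argument is a form of Kesten's criterion. Extend `Re f` linearly to a functional `Φ` on the real
group algebra, and let `σ` be the sum of the elements of a finite symmetric set `S`. If `Re f ≥ ε`
on `Sⁿ`, then `ε |S|ⁿ ≤ Φ(σⁿ)`. Positive-definiteness says that `Φ(a* a) ≥ 0`; applied to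
`σⁿ - Φ(σⁿ)` it gives `Φ(σⁿ)² ≤ Φ(σ²ⁿ)`, and this can be iterated. On the other hand, since `f` is
square-summable, `Φ(σᵐ) = ⟨Re f, λ(σ)ᵐ δ₁⟩ = O(‖λ(σ)‖ᵐ)`, where `λ` is the left regular
representation. Letting the number of squarings tend to infinity yields `ε |S|ⁿ ≤ ‖λ(σ)‖ⁿ` with the
constant `‖f‖₂` gone, so the choice of `f` may now vary with `n`, and `n → ∞` gives `|S| ≤ ‖λ(σ)‖`.

By the parallelogram identity, a unit vector `ξ` for which `‖λ(σ) ξ‖` is close to `|S|` is almost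
invariant under `S`, and a weak-* limit of the means `φ ↦ ⟨φ ξ, ξ⟩` is left-invariant.
-/

open Filter Topology MulOpposite
open scoped BoundedContinuousFunction InnerProductSpace lp Pointwise

theorem le_of_forall_mul_pow_le {c C x y : ℝ} {u : ℕ → ℕ} (hc : 0 < c) (hy : 0 ≤ y)
    (hu : Tendsto u atTop atTop) (h : ∀ k, c * x ^ u k ≤ C * y ^ u k) : x ≤ y := by
  by_contra! hyx
  have hx : 0 < x := hy.trans_lt hyx
  have hlim : Tendsto (fun k => C * (y / x) ^ u k) atTop (𝓝 (C * 0)) :=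
    ((tendsto_pow_atTop_nhds_zero_of_lt_one (by positivity) ((div_lt_one hx).2 hyx)).comp
      hu).const_mul C
  have hle : c ≤ C * 0 := ge_of_tendsto' hlim fun k => by
    rw [div_pow, mul_div_assoc', le_div_iff₀ (by positivity)]
    exact h k
  linarith

section AlmostInvariantVectors

variable {ι H : Type*} [NormedAddCommGroup H] [InnerProductSpace ℝ H]

theorem sum_sum_norm_sub_sq (s : Finset ι) (v : ι → H) :
    ∑ i ∈ s, ∑ j ∈ s, ‖v i - v j‖ ^ 2 =
      2 * (s.card * ∑ i ∈ s, ‖v i‖ ^ 2 - ‖∑ i ∈ s, v i‖ ^ 2) := by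
  have hinner : ‖∑ i ∈ s, v i‖ ^ 2 = ∑ i ∈ s, ∑ j ∈ s, ⟪v i, v j⟫_ℝ := by
    rw [← real_inner_self_eq_norm_sq, sum_inner]
    exact Finset.sum_congr rfl fun i _ => inner_sum _ _ _
  simp only [norm_sub_sq_real, Finset.sum_add_distrib, Finset.sum_sub_distrib, Finset.sum_const,
    nsmul_eq_mul, ← Finset.mul_sum, hinner]
  ring

theorem norm_sub_sq_le_card_sq_sub {s : Finset ι} {v : ι → H} (hv : ∀ i ∈ s, ‖v i‖ ≤ 1) {i j : ι}
    (hi : i ∈ s) (hj : j ∈ s) :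
    ‖v i - v j‖ ^ 2 ≤ 2 * ((s.card : ℝ) ^ 2 - ‖∑ k ∈ s, v k‖ ^ 2) := by
  have hsum : ∑ k ∈ s, ‖v k‖ ^ 2 ≤ s.card := by
    simpa using Finset.sum_le_sum fun k hk => pow_le_one₀ (n := 2) (norm_nonneg _) (hv k hk)
  calc ‖v i - v j‖ ^ 2
      ≤ ∑ l ∈ s, ‖v i - v l‖ ^ 2 :=
        Finset.single_le_sum (f := fun l => ‖v i - v l‖ ^ 2) (fun _ _ => by positivity) hj
    _ ≤ ∑ k ∈ s, ∑ l ∈ s, ‖v k - v l‖ ^ 2 :=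
        Finset.single_le_sum (f := fun k => ∑ l ∈ s, ‖v k - v l‖ ^ 2)
          (fun _ _ => by positivity) hi
    _ = 2 * (s.card * ∑ k ∈ s, ‖v k‖ ^ 2 - ‖∑ k ∈ s, v k‖ ^ 2) := sum_sum_norm_sub_sq s v
    _ ≤ 2 * ((s.card : ℝ) ^ 2 - ‖∑ k ∈ s, v k‖ ^ 2) := by rw [sq (s.card : ℝ)]; gcongr

theorem exists_norm_eq_one_forall_norm_sub_le {s : Finset ι} (hs : s.Nonempty)
    {T : ι → H →L[ℝ] H} (hT : ∀ i ∈ s, ‖T i‖ ≤ 1) (hsum : s.card ≤ ‖∑ i ∈ s, T i‖)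
    {δ : ℝ} (hδ : 0 < δ) :
    ∃ ξ : H, ‖ξ‖ = 1 ∧ ∀ i ∈ s, ∀ j ∈ s, ‖T i ξ - T j ξ‖ ≤ δ := by
  have hcard : (0 : ℝ) < s.card := by exact_mod_cast hs.card_pos
  set r : ℝ := √(s.card ^ 2 - δ ^ 2 / 2)
  have hr : r < ‖∑ i ∈ s, T i‖ :=
    ((Real.sqrt_lt' hcard).2 (by linarith [sq_pos_of_pos hδ])).trans_le hsum
  obtain ⟨ξ, hξ, hrξ⟩ :=
    (∑ i ∈ s, T i).exists_nnnorm_eq_one_lt_apply_of_lt_opNNNorm (r := ⟨r, Real.sqrt_nonneg _⟩) hr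
  replace hξ : ‖ξ‖ = 1 := congrArg NNReal.toReal hξ
  replace hrξ : r < ‖∑ i ∈ s, T i ξ‖ := by
    rw [← sum_apply]; exact hrξ
  have hlarge : (s.card : ℝ) ^ 2 - δ ^ 2 / 2 < ‖∑ i ∈ s, T i ξ‖ ^ 2 :=
    (Real.sqrt_lt' ((Real.sqrt_nonneg _).trans_lt hrξ)).1 hrξ
  refine ⟨ξ, hξ, fun i hi j hj => ?_⟩
  have hle := norm_sub_sq_le_card_sq_sub (v := fun i => T i ξ)
    (fun i hi => hξ ▸ (T i).le_of_opNorm_le_of_le (hT i hi) le_rfl |>.trans_eq (one_mul _)) hi hj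
  exact abs_le_of_sq_le_sq' (by linarith) hδ.le |>.2

end AlmostInvariantVectors

section PermutationRepresentation

variable {G X : Type*} [Group G] [MulAction G X]

theorem hasSum_sq_lp (ξ : ℓ²(X, ℝ)) : HasSum (fun x => ξ x ^ 2) (‖ξ‖ ^ 2) := by
  simpa [real_inner_self_eq_norm_sq] using lp.hasSum_inner (𝕜 := ℝ) ξ ξ

theorem hasSum_sq_smul_lp (g : G) (ξ : ℓ²(X, ℝ)) :
    HasSum (fun x => ξ (g • x) ^ 2) (‖ξ‖ ^ 2) :=
  (MulAction.toPerm g).hasSum_iff (f := fun x => ξ x ^ 2) |>.2 (hasSum_sq_lp ξ)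

theorem memℓp_two_comp_smul (g : G) (ξ : ℓ²(X, ℝ)) : Memℓp (fun x => ξ (g • x)) 2 :=
  memℓp_gen (by simpa using (hasSum_sq_smul_lp g ξ).summable)

/-- The isometric action of a group element on `ℓ²(X, ℝ)` by `(g ξ)(x) = ξ (g⁻¹ x)`. -/
noncomputable def lpTranslate (g : G) : ℓ²(X, ℝ) →ₗᵢ[ℝ] ℓ²(X, ℝ) where
  toFun ξ := ⟨fun x => ξ (g⁻¹ • x), memℓp_two_comp_smul g⁻¹ ξ⟩
  map_add' _ _ := rfl
  map_smul' _ _ := rfl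
  norm_map' ξ := (sq_eq_sq₀ (norm_nonneg _) (norm_nonneg _)).1
    ((hasSum_sq_lp _).unique (hasSum_sq_smul_lp g⁻¹ ξ))

/-- The permutation representation of `G` on `ℓ²(X, ℝ)`, with values in bounded operators so that
it extends to the group algebra. For `X = G` this is the left regular representation. -/
noncomputable def permRep (G X : Type*) [Group G] [MulAction G X] :
    G →* (ℓ²(X, ℝ) →L[ℝ] ℓ²(X, ℝ)) where
  toFun g := (lpTranslate g).toContinuousLinearMap
  map_one' := by
    ext ξ x
    change ξ ((1 : G)⁻¹ • x) = ξ x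
    rw [inv_one, one_smul]
  map_mul' g h := by
    ext ξ x
    change ξ ((g * h)⁻¹ • x) = ξ (h⁻¹ • g⁻¹ • x)
    rw [mul_inv_rev, mul_smul]

theorem permRep_apply_apply (g : G) (ξ : ℓ²(X, ℝ)) (x : X) :
    permRep G X g ξ x = ξ (g⁻¹ • x) :=
  rfl

theorem norm_permRep_apply (g : G) (ξ : ℓ²(X, ℝ)) : ‖permRep G X g ξ‖ = ‖ξ‖ :=
  (lpTranslate g).norm_map ξ

theorem norm_permRep_le_one (g : G) : ‖permRep G X g‖ ≤ 1 :=
  (lpTranslate g).norm_toContinuousLinearMap_le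

theorem permRep_single [DecidableEq X] (g : G) (x : X) :
    permRep G X g (lp.single 2 x 1) = lp.single 2 (g • x) 1 := by
  ext y
  simp [permRep_apply_apply, lp.single_apply, Pi.single_apply, inv_smul_eq_iff]

end PermutationRepresentation

section GroupAlgebra

/-- The sum in `R[G]` of the elements of a finite set; it is `|S|` times the uniform probability
measure on `S`, left unnormalized so as to avoid division. -/
noncomputable def elementSum (R : Type*) {G : Type*} [Semiring R] [Monoid G] (S : Finset G) :
    MonoidAlgebra R G :=
  ∑ s ∈ S, MonoidAlgebra.of R G s

variable {R G : Type*} [CommSemiring R]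

/-- The linear extension to the monoid algebra `R[G]` of a function `F : G → R`. -/
noncomputable def linearExtension (F : G → R) : MonoidAlgebra R G →ₗ[R] R :=
  (Finsupp.linearCombination R F).comp
    (MonoidAlgebra.coeffLinearEquiv (R := R) (S := R) (M := G)).toLinearMap

theorem linearExtension_single (F : G → R) (g : G) (r : R) :
    linearExtension F (MonoidAlgebra.single g r) = r * F g := by
  simp [linearExtension]

theorem linearExtension_elementSum_mul [Monoid G] (F : G → R) (S : Finset G)
    (a : MonoidAlgebra R G) :
    linearExtension F (elementSum R S * a) =
      ∑ s ∈ S, linearExtension (fun g => F (s * g)) a := by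
  rw [elementSum, Finset.sum_mul, map_sum]
  refine Finset.sum_congr rfl fun s _ => ?_
  induction a using MonoidAlgebra.induction_linear with
  | zero => simp
  | add a b ha hb => rw [mul_add, map_add, map_add, ha, hb]
  | single g r =>
    rw [MonoidAlgebra.of_apply, MonoidAlgebra.single_mul_single, linearExtension_single,
      linearExtension_single, one_mul]

theorem card_pow_nsmul_le_linearExtension [PartialOrder R] [IsOrderedRing R] [Monoid G]
    [DecidableEq G] {ε : R} (S : Finset G) (n : ℕ) :
    ∀ {F : G → R}, (∀ g ∈ S ^ n, ε ≤ F g) →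
      S.card ^ n • ε ≤ linearExtension F (elementSum R S ^ n) := by
  induction n with
  | zero =>
    intro F hF
    simpa [MonoidAlgebra.one_def, linearExtension_single] using hF 1 (by simp)
  | succ n ih =>
    intro F hF
    rw [pow_succ' (elementSum R S), linearExtension_elementSum_mul, pow_succ', mul_nsmul']
    refine Finset.card_nsmul_le_sum _ _ _ fun s hs => ih fun g hg => hF _ ?_
    rw [pow_succ']
    exact Finset.mul_mem_mul hs hg

/-- The involution of the group algebra induced by `g ↦ g⁻¹`, as a homomorphism to the opposite
algebra. -/
noncomputable def involution (R G : Type*) [CommSemiring R] [Group G] :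
    MonoidAlgebra R G →ₐ[R] (MonoidAlgebra R G)ᵐᵒᵖ :=
  MonoidAlgebra.lift R (MonoidAlgebra R G)ᵐᵒᵖ G
    ((MonoidAlgebra.of R G).op.comp (MulEquiv.inv' G).toMonoidHom)

theorem involution_single [Group G] (g : G) (r : R) :
    involution R G (MonoidAlgebra.single g r) = op (MonoidAlgebra.single g⁻¹ r) := by
  simp [involution, MonoidAlgebra.lift_single, ← op_smul]

theorem involution_elementSum_pow [Group G] [DecidableEq G] {S : Finset G} (hS : S⁻¹ = S)
    (n : ℕ) :
    involution R G (elementSum R S ^ n) = op (elementSum R S ^ n) := by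
  have hsum : involution R G (elementSum R S) = op (elementSum R S) := by
    conv_rhs => rw [← hS]
    simp [elementSum, involution_single, Finset.sum_inv_index]
  rw [map_pow, hsum, op_pow]

theorem linearExtension_involution_mul_self [Group G] (F : G → R) (a : MonoidAlgebra R G) :
    linearExtension F (unop (involution R G a) * a) =
      ∑ x ∈ a.coeff.support, ∑ y ∈ a.coeff.support,
        a.coeff x * a.coeff y * F (y⁻¹ * x) := by
  have ha : a = ∑ x ∈ a.coeff.support, MonoidAlgebra.single x (a.coeff x) :=
    a.sum_coeff_single.symm
  conv_lhs => rw [ha]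
  simp only [map_sum, Finset.unop_sum, involution_single, unop_op, Finset.sum_mul_sum,
    MonoidAlgebra.single_mul_single, linearExtension_single]
  rw [Finset.sum_comm]
  simp only [mul_comm]

end GroupAlgebra

section PositiveDefinite

variable {Γ : Type} [Group Γ] {f : Γ → ℂ}

theorem IsPosDefFn.sum_re_nonneg (hf : IsPosDefFn f) (s : Finset Γ) (c : Γ → ℝ) :
    0 ≤ ∑ x ∈ s, ∑ y ∈ s, c x * c y * (f (y⁻¹ * x)).re := by
  let e := s.equivFin.symm
  have hpos := (Complex.le_def.1 (hf s.card (fun j => e j) fun j => (c (e j) : ℂ))).1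
  simp only [Complex.conj_ofReal, Complex.re_sum, ← Complex.ofReal_mul, Complex.re_ofReal_mul,
    Complex.zero_re] at hpos
  have hsum : ∀ φ : Γ → ℝ, ∑ j, φ (e j) = ∑ x ∈ s, φ x := fun φ => by
    rw [e.sum_comp fun x : s => φ x, Finset.sum_coe_sort s φ]
  rwa [hsum fun x => ∑ k, c x * c (e k) * (f ((e k : Γ)⁻¹ * x)).re,
    Finset.sum_congr rfl fun x _ => hsum fun y => c x * c y * (f (y⁻¹ * x)).re] at hpos

theorem IsPosDefFn.linearExtension_re_sq_le (hf : IsPosDefFn f) (hf1 : f 1 = 1)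
    {a : MonoidAlgebra ℝ Γ} (ha : involution ℝ Γ a = op a) :
    linearExtension (fun g => (f g).re) a ^ 2 ≤ linearExtension (fun g => (f g).re) (a * a) := by
  set Φ := linearExtension fun g => (f g).re
  have hΦ1 : Φ 1 = 1 := by
    rw [MonoidAlgebra.one_def, linearExtension_single, hf1, Complex.one_re, one_mul]
  set b := a - Φ a • (1 : MonoidAlgebra ℝ Γ)
  have hb : unop (involution ℝ Γ b) = b := by
    rw [map_sub, map_smul, map_one, ha, unop_sub, unop_op, unop_smul, unop_one]
  have hbb : b * b = a * a - (2 * Φ a) • a + Φ a ^ 2 • (1 : MonoidAlgebra ℝ Γ) := by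
    simp only [b, sub_mul, mul_sub, smul_mul_assoc, mul_smul_comm, one_mul, mul_one]
    module
  have hpos : 0 ≤ Φ (unop (involution ℝ Γ b) * b) := by
    rw [linearExtension_involution_mul_self]
    exact hf.sum_re_nonneg _ _
  rw [hb, hbb, map_add, map_sub, map_smul, map_smul, hΦ1, smul_eq_mul, smul_eq_mul] at hpos
  linarith

theorem IsPosDefFn.linearExtension_re_pow_le (hf : IsPosDefFn f) (hf1 : f 1 = 1)
    [DecidableEq Γ] {S : Finset Γ} (hS : S⁻¹ = S) {r : ℝ} (hr : 0 ≤ r) {n : ℕ}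
    (hn : r ≤ linearExtension (fun g => (f g).re) (elementSum ℝ S ^ n)) (k : ℕ) :
    r ^ 2 ^ k ≤ linearExtension (fun g => (f g).re) (elementSum ℝ S ^ (n * 2 ^ k)) := by
  induction k with
  | zero => simpa using hn
  | succ k ih =>
    calc r ^ 2 ^ (k + 1) = (r ^ 2 ^ k) ^ 2 := by rw [← pow_mul, pow_succ]
      _ ≤ linearExtension (fun g => (f g).re) (elementSum ℝ S ^ (n * 2 ^ k)) ^ 2 := by gcongr
      _ ≤ linearExtension (fun g => (f g).re)
          (elementSum ℝ S ^ (n * 2 ^ k) * elementSum ℝ S ^ (n * 2 ^ k)) :=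
        hf.linearExtension_re_sq_le hf1 (involution_elementSum_pow hS _)
      _ = linearExtension (fun g => (f g).re) (elementSum ℝ S ^ (n * 2 ^ (k + 1))) := by
        rw [← pow_add, ← mul_add, pow_succ, mul_two]

end PositiveDefinite

section Kesten

variable {G : Type*} [Group G]

theorem linearExtension_eq_inner [DecidableEq G] (F : ℓ²(G, ℝ)) (a : MonoidAlgebra ℝ G) :
    linearExtension F a =
      ⟪F, MonoidAlgebra.lift ℝ _ G (permRep G G) a (lp.single 2 1 1)⟫_ℝ := by
  induction a using MonoidAlgebra.induction_linear with
  | zero => simp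
  | add a b ha hb => rw [map_add, map_add, add_apply, inner_add_right, ha, hb]
  | single g r =>
    simp [linearExtension_single, MonoidAlgebra.lift_single, permRep_single, inner_smul_right,
      lp.inner_single_right]

theorem linearExtension_pow_le (F : ℓ²(G, ℝ)) (a : MonoidAlgebra ℝ G) (n : ℕ) :
    linearExtension F (a ^ n) ≤ ‖F‖ * ‖MonoidAlgebra.lift ℝ _ G (permRep G G) a‖ ^ n := by
  classical
  let A := MonoidAlgebra.lift ℝ _ G (permRep G G) a
  have hδ : ‖(lp.single 2 1 1 : ℓ²(G, ℝ))‖ = 1 := by simp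
  have : Nontrivial ℓ²(G, ℝ) :=
    ⟨lp.single 2 1 1, 0, norm_ne_zero_iff.1 (by rw [hδ]; exact one_ne_zero)⟩
  calc linearExtension F (a ^ n) = ⟪F, (A ^ n) (lp.single 2 1 1)⟫_ℝ := by
        rw [linearExtension_eq_inner, map_pow]
    _ ≤ ‖F‖ * ‖(A ^ n) (lp.single 2 1 1)‖ := real_inner_le_norm _ _
    _ ≤ ‖F‖ * ‖A ^ n‖ := by gcongr; simpa [hδ] using (A ^ n).le_opNorm (lp.single 2 1 1)
    _ ≤ ‖F‖ * ‖A‖ ^ n := by gcongr; exact norm_pow_le A n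

theorem lift_permRep_elementSum {X : Type*} [MulAction G X] (S : Finset G) :
    MonoidAlgebra.lift ℝ _ G (permRep G X) (elementSum ℝ S) = ∑ s ∈ S, permRep G X s := by
  simp [elementSum]

variable {Γ : Type} [Group Γ]

theorem IsPosDefFn.mul_card_pow_le_norm_sum_permRep_pow {f : Γ → ℂ} (hf : IsPosDefFn f)
    (hf1 : f 1 = 1) (hf2 : Memℓp f 2) [DecidableEq Γ] {S : Finset Γ} (hS : S⁻¹ = S) {ε : ℝ}
    (hε : 0 ≤ ε) {n : ℕ} (hfS : ∀ g ∈ S ^ n, ε ≤ (f g).re) :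
    ε * (S.card : ℝ) ^ n ≤ ‖∑ s ∈ S, permRep Γ Γ s‖ ^ n := by
  let F : ℓ²(Γ, ℝ) := ⟨fun g => (f g).re, hf2.mono' fun g => Complex.abs_re_le_norm (f g)⟩
  have hlower : ε * (S.card : ℝ) ^ n ≤ linearExtension F (elementSum ℝ S ^ n) := by
    simpa [mul_comm] using card_pow_nsmul_le_linearExtension S n hfS
  refine le_of_forall_mul_pow_le (c := 1) (C := ‖F‖) one_pos (by positivity)
    (tendsto_pow_atTop_atTop_of_one_lt one_lt_two) fun k => ?_
  calc 1 * (ε * (S.card : ℝ) ^ n) ^ 2 ^ k = (ε * (S.card : ℝ) ^ n) ^ 2 ^ k := one_mul _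
    _ ≤ linearExtension F (elementSum ℝ S ^ (n * 2 ^ k)) :=
      hf.linearExtension_re_pow_le hf1 hS (by positivity) hlower k
    _ ≤ ‖F‖ * (‖∑ s ∈ S, permRep Γ Γ s‖ ^ n) ^ 2 ^ k := by
      rw [← pow_mul, ← lift_permRep_elementSum]
      exact linearExtension_pow_le F _ _

theorem card_le_norm_sum_permRep {ε : ℝ} (hε : 0 < ε) {ι : Type*} {l : Filter ι} [l.NeBot]
    {f : ι → Γ → ℂ} (hf2 : ∀ i, Memℓp (f i) 2) (hpd : ∀ i, IsPosDefFn (f i))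
    (hf1 : ∀ i, f i 1 = 1) (hsep : ∀ g, ∀ᶠ i in l, ε ≤ (f i g).re) [DecidableEq Γ]
    {S : Finset Γ} (hS : S⁻¹ = S) : S.card ≤ ‖∑ s ∈ S, permRep Γ Γ s‖ := by
  refine le_of_forall_mul_pow_le (C := 1) hε (norm_nonneg _) tendsto_id fun n => ?_
  obtain ⟨i, hi⟩ := ((eventually_all_finset (S ^ n)).2 fun g _ => hsep g).exists
  rw [one_mul]
  exact (hpd i).mul_card_pow_le_norm_sum_permRep_pow (hf1 i) (hf2 i) hS hε.le hi

theorem exists_almost_invariant_unit_vector {ε : ℝ} (hε : 0 < ε) {ι : Type*} {l : Filter ι}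
    [l.NeBot] {f : ι → Γ → ℂ} (hf2 : ∀ i, Memℓp (f i) 2) (hpd : ∀ i, IsPosDefFn (f i))
    (hf1 : ∀ i, f i 1 = 1) (hsep : ∀ g, ∀ᶠ i in l, ε ≤ (f i g).re) (S : Finset Γ) {δ : ℝ}
    (hδ : 0 < δ) :
    ∃ ξ : ℓ²(Γ, ℝ), ‖ξ‖ = 1 ∧ ∀ s ∈ S, ‖permRep Γ Γ s ξ - ξ‖ ≤ δ := by
  classical
  let T : Finset Γ := insert 1 (S ∪ S⁻¹)
  have hT : T⁻¹ = T := by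
    ext
    simp [T, or_comm]
  have hT1 : 1 ∈ T := Finset.mem_insert_self _ _
  obtain ⟨ξ, hξ, hclose⟩ := exists_norm_eq_one_forall_norm_sub_le ⟨1, hT1⟩
    (fun s _ => norm_permRep_le_one s) (card_le_norm_sum_permRep hε hf2 hpd hf1 hsep hT) hδ
  refine ⟨ξ, hξ, fun s hs => ?_⟩
  simpa using hclose s (by simp [T, hs]) 1 hT1

end Kesten

section InvariantMeans

variable {X : Type*} [TopologicalSpace X]

/-- A mean on the bounded continuous functions on `X`: a positive unital linear functional. On a
discrete space these are the means on `ℓ∞(X, ℝ)`. -/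
def IsMean (m : (X →ᵇ ℝ) →ₗ[ℝ] ℝ) : Prop :=
  (∀ φ : X →ᵇ ℝ, (∀ x, 0 ≤ φ x) → 0 ≤ m φ) ∧ m 1 = 1

theorem IsMean.abs_apply_le {m : (X →ᵇ ℝ) →ₗ[ℝ] ℝ} (hm : IsMean m) (φ : X →ᵇ ℝ) :
    |m φ| ≤ ‖φ‖ := by
  have hφ : ∀ x, |φ x| ≤ ‖φ‖ := φ.norm_coe_le_norm
  have hsub := hm.1 (‖φ‖ • 1 - φ) fun x => by simpa using (abs_le.1 (hφ x)).2
  have hadd := hm.1 (‖φ‖ • 1 + φ) fun x => by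
    simpa using neg_le_iff_add_nonneg'.1 (abs_le.1 (hφ x)).1
  rw [map_sub, map_smul, hm.2, smul_eq_mul, mul_one] at hsub
  rw [map_add, map_smul, hm.2, smul_eq_mul, mul_one] at hadd
  exact abs_le.2 ⟨by linarith, by linarith⟩

theorem exists_isMean_tendsto {ι : Type*} (U : Ultrafilter ι) {m : ι → (X →ᵇ ℝ) →ₗ[ℝ] ℝ}
    (hm : ∀ i, IsMean (m i)) :
    ∃ μ : (X →ᵇ ℝ) →ₗ[ℝ] ℝ, IsMean μ ∧ ∀ φ, Tendsto (fun i => m i φ) U (𝓝 (μ φ)) := by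
  have hbound : ∀ i φ, ‖m i φ‖ ≤ 1 * ‖φ‖ := fun i φ => by simpa using (hm i).abs_apply_le φ
  let d : ι → WeakDual ℝ (X →ᵇ ℝ) := fun i =>
    StrongDual.toWeakDual ((m i).mkContinuous 1 (hbound i))
  have hd : ∀ i, WeakDual.toStrongDual (d i) ∈ Metric.closedBall 0 1 := fun i =>
    mem_closedBall_zero_iff.2 ((m i).mkContinuous_norm_le zero_le_one (hbound i))
  obtain ⟨μ, -, hμ⟩ := (WeakDual.isCompact_closedBall (0 : StrongDual ℝ (X →ᵇ ℝ)) 1)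
    |>.ultrafilter_le_nhds (U.map d) (le_principal_iff.2 (mem_map.2 (Eventually.of_forall hd)))
  have hlim : ∀ φ, Tendsto (fun i => m i φ) U (𝓝 (μ φ)) := fun φ =>
    ((WeakDual.eval_continuous φ).tendsto μ).comp hμ
  refine ⟨(μ : (X →ᵇ ℝ) →ₗ[ℝ] ℝ), ⟨fun φ hφ => ?_, ?_⟩, hlim⟩
  · exact ge_of_tendsto' (hlim φ) fun i => (hm i).1 φ hφ
  · exact tendsto_nhds_unique (hlim 1) (tendsto_const_nhds.congr fun i => (hm i).2.symm)

variable {G : Type*} [Group G] [MulAction G X]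

/-- The left translate `x ↦ φ (g⁻¹ • x)` of a bounded continuous function. -/
def leftTranslate [ContinuousConstSMul G X] (g : G) (φ : X →ᵇ ℝ) : X →ᵇ ℝ :=
  φ.compContinuous ⟨fun x => g⁻¹ • x, continuous_const_smul g⁻¹⟩

theorem exists_isMean_leftTranslate_eq_of_approx [ContinuousConstSMul G X]
    (h : ∀ (S : Finset G) (δ : ℝ), 0 < δ → ∃ m : (X →ᵇ ℝ) →ₗ[ℝ] ℝ, IsMean m ∧
      ∀ g ∈ S, ∀ φ, |m (leftTranslate g φ) - m φ| ≤ δ * ‖φ‖) :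
    ∃ m : (X →ᵇ ℝ) →ₗ[ℝ] ℝ, IsMean m ∧ ∀ (g : G) φ, m (leftTranslate g φ) = m φ := by
  classical
  choose m hm hinv using fun p : Finset G × ℕ => h p.1 (1 / ((p.2 : ℝ) + 1)) (by positivity)
  let U : Ultrafilter (Finset G × ℕ) := Ultrafilter.of atTop
  have hU : (U : Filter (Finset G × ℕ)) ≤ atTop := Ultrafilter.of_le _
  obtain ⟨μ, hμ, hlim⟩ := exists_isMean_tendsto U hm
  refine ⟨μ, hμ, fun g φ => sub_eq_zero.1 <|
    tendsto_nhds_unique ((hlim (leftTranslate g φ)).sub (hlim φ)) ?_⟩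
  have hg : ∀ᶠ p : Finset G × ℕ in U, g ∈ p.1 :=
    hU <| (eventually_ge_atTop ({g}, 0)).mono fun p hp => hp.1 (Finset.mem_singleton_self g)
  have hsnd : Tendsto (Prod.snd : Finset G × ℕ → ℕ) U atTop :=
    (prod_atTop_atTop_eq (α := Finset G) (β := ℕ) ▸ tendsto_snd).mono_left hU
  have hδ : Tendsto (fun p : Finset G × ℕ => 1 / ((p.2 : ℝ) + 1) * ‖φ‖) U (𝓝 0) := by
    simpa using (tendsto_one_div_add_atTop_nhds_zero_nat.comp hsnd).mul_const ‖φ‖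
  exact squeeze_zero_norm' (hg.mono fun p hp => hinv p g hp φ) hδ

theorem summable_sq_mul (ξ : ℓ²(X, ℝ)) (φ : X →ᵇ ℝ) : Summable fun x => ξ x ^ 2 * φ x :=
  .of_norm_bounded ((hasSum_sq_lp ξ).summable.mul_right ‖φ‖) fun x => by
    rw [norm_mul, Real.norm_of_nonneg (sq_nonneg _)]
    gcongr
    exact φ.norm_coe_le_norm x

/-- The functional `φ ↦ ⟨φ ξ, ξ⟩` that `ξ ∈ ℓ²(X, ℝ)` induces through the action of bounded
functions by multiplication. -/
noncomputable def vectorState (ξ : ℓ²(X, ℝ)) : (X →ᵇ ℝ) →ₗ[ℝ] ℝ where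
  toFun φ := ∑' x, ξ x ^ 2 * φ x
  map_add' φ ψ := by
    rw [← (summable_sq_mul ξ φ).tsum_add (summable_sq_mul ξ ψ)]
    simp only [BoundedContinuousFunction.add_apply, mul_add]
  map_smul' c φ := by
    simp only [BoundedContinuousFunction.smul_apply, smul_eq_mul, mul_left_comm, tsum_mul_left,
      RingHom.id_apply]

theorem vectorState_apply (ξ : ℓ²(X, ℝ)) (φ : X →ᵇ ℝ) :
    vectorState ξ φ = ∑' x, ξ x ^ 2 * φ x :=
  rfl

theorem isMean_vectorState {ξ : ℓ²(X, ℝ)} (hξ : ‖ξ‖ = 1) : IsMean (vectorState ξ) := by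
  refine ⟨fun φ hφ => tsum_nonneg fun x => mul_nonneg (sq_nonneg _) (hφ x), ?_⟩
  simp [vectorState_apply, (hasSum_sq_lp ξ).tsum_eq, hξ]

theorem vectorState_leftTranslate [ContinuousConstSMul G X] (ξ : ℓ²(X, ℝ)) (g : G)
    (φ : X →ᵇ ℝ) :
    vectorState ξ (leftTranslate g φ) = vectorState (permRep G X g⁻¹ ξ) φ := by
  rw [vectorState_apply, ← (MulAction.toPerm g).tsum_eq]
  simp [vectorState_apply, leftTranslate, permRep_apply_apply]

theorem abs_vectorState_sub_le (ξ η : ℓ²(X, ℝ)) (φ : X →ᵇ ℝ) :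
    |vectorState ξ φ - vectorState η φ| ≤ ‖ξ - η‖ * ‖ξ + η‖ * ‖φ‖ := by
  obtain ⟨hsummable, hle⟩ := lp.tsum_mul_le_mul_norm
    (by simpa using Real.HolderConjugate.two_two) (ξ - η) (ξ + η)
  have hterm : ∀ x, ‖ξ x ^ 2 * φ x - η x ^ 2 * φ x‖ ≤ ‖(ξ - η) x‖ * ‖(ξ + η) x‖ * ‖φ‖ := fun x =>
    calc ‖ξ x ^ 2 * φ x - η x ^ 2 * φ x‖ = ‖(ξ - η) x‖ * ‖(ξ + η) x‖ * ‖φ x‖ := by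
          rw [← norm_mul, ← norm_mul, lp.coeFn_sub, lp.coeFn_add, Pi.sub_apply, Pi.add_apply]
          ring_nf
      _ ≤ ‖(ξ - η) x‖ * ‖(ξ + η) x‖ * ‖φ‖ := by gcongr; exact φ.norm_coe_le_norm x
  calc |vectorState ξ φ - vectorState η φ|
      = ‖∑' x, (ξ x ^ 2 * φ x - η x ^ 2 * φ x)‖ := by
        rw [(summable_sq_mul ξ φ).tsum_sub (summable_sq_mul η φ), Real.norm_eq_abs,
          vectorState_apply, vectorState_apply]
    _ ≤ ∑' x, ‖(ξ - η) x‖ * ‖(ξ + η) x‖ * ‖φ‖ :=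
        tsum_of_norm_bounded (hsummable.mul_right ‖φ‖).hasSum hterm
    _ ≤ ‖ξ - η‖ * ‖ξ + η‖ * ‖φ‖ := by
        rw [tsum_mul_right]
        gcongr

theorem exists_isMean_leftTranslate_eq_of_almost_invariant [ContinuousConstSMul G X]
    (h : ∀ (S : Finset G) (δ : ℝ), 0 < δ →
      ∃ ξ : ℓ²(X, ℝ), ‖ξ‖ = 1 ∧ ∀ s ∈ S, ‖permRep G X s ξ - ξ‖ ≤ δ) :
    ∃ m : (X →ᵇ ℝ) →ₗ[ℝ] ℝ, IsMean m ∧ ∀ (g : G) φ, m (leftTranslate g φ) = m φ := by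
  classical
  refine exists_isMean_leftTranslate_eq_of_approx fun S δ hδ => ?_
  obtain ⟨ξ, hξ, hinv⟩ := h S⁻¹ (δ / 2) (half_pos hδ)
  refine ⟨vectorState ξ, isMean_vectorState hξ, fun g hg φ => ?_⟩
  set η := permRep G X g⁻¹ ξ
  have hηξ : ‖η + ξ‖ ≤ 2 := (norm_add_le _ _).trans_eq <| by
    rw [norm_permRep_apply, hξ, one_add_one_eq_two]
  calc |vectorState ξ (leftTranslate g φ) - vectorState ξ φ|
      ≤ ‖η - ξ‖ * ‖η + ξ‖ * ‖φ‖ := by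
        rw [vectorState_leftTranslate]
        exact abs_vectorState_sub_le η ξ φ
    _ ≤ δ / 2 * 2 * ‖φ‖ := by
        gcongr
        exact hinv g⁻¹ (Finset.inv_mem_inv hg)
    _ = δ * ‖φ‖ := by rw [div_mul_cancel₀ δ two_ne_zero]

end InvariantMeans

theorem amenable_of_eventually_separated_posdef_general {Γ : Type} [Group Γ] [TopologicalSpace Γ]
    [ContinuousConstSMul Γ Γ] {ε : ℝ} (hε : 0 < ε) {ι : Type*} {l : Filter ι} [l.NeBot]
    {f : ι → Γ → ℂ} (hf2 : ∀ i, Memℓp (f i) 2) (hpd : ∀ i, IsPosDefFn (f i))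
    (hf1 : ∀ i, f i 1 = 1) (hsep : ∀ g, ∀ᶠ i in l, ε ≤ (f i g).re) :
    ∃ m : (Γ →ᵇ ℝ) →ₗ[ℝ] ℝ, IsMean m ∧ ∀ (g : Γ) φ, m (leftTranslate g φ) = m φ :=
  exists_isMean_leftTranslate_eq_of_almost_invariant fun S _ hδ =>
    exists_almost_invariant_unit_vector hε hf2 hpd hf1 hsep S hδ

/-- If a discrete group `Γ` admits `ε > 0` and a net of normalized finitely supported
positive-definite functions which, at every point, are eventually real-valued and `≥ ε`,
then `Γ` is amenable (there is a left-invariant mean on `ℓ∞(Γ, ℝ)`). -/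
theorem amenable_of_eventually_separated_posdef
    {Γ : Type} [Group Γ] [TopologicalSpace Γ] [DiscreteTopology Γ]
    (ε : ℝ) (hε : 0 < ε)
    (I : Type) (pI : Preorder I) (hne : Nonempty I) (hdir : IsDirected I (· ≤ ·))
    (f : I → Γ → ℂ)
    (hsupp : ∀ i, (Function.support (f i)).Finite)
    (hpd : ∀ i, IsPosDefFn (f i))
    (hnorm : ∀ i, f i 1 = 1)
    (hsep : ∀ g : Γ, ∃ i₀ : I, ∀ i, i₀ ≤ i → (ε : ℂ) ≤ f i g) :
    ∃ m : BoundedContinuousFunction Γ ℝ →ₗ[ℝ] ℝ,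
      (∀ φ : BoundedContinuousFunction Γ ℝ, (∀ t, 0 ≤ φ t) → 0 ≤ m φ) ∧
      m 1 = 1 ∧
      ∀ (g : Γ) (φ : BoundedContinuousFunction Γ ℝ),
        m (φ.compContinuous ⟨fun t => g⁻¹ * t, continuous_of_discreteTopology⟩) = m φ := by
  have hf2 : ∀ i, Memℓp (f i) 2 := fun i => (memℓp_zero (hsupp i)).of_exponent_ge zero_le
  have hev : ∀ g, ∀ᶠ i in atTop, ε ≤ (f i g).re := fun g =>
    let ⟨i₀, hi₀⟩ := hsep g
    (eventually_ge_atTop i₀).mono fun i hi => (Complex.le_def.1 (hi₀ i hi)).1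
  have : ContinuousConstSMul Γ Γ := ⟨fun _ => continuous_of_discreteTopology⟩
  obtain ⟨m, ⟨hpos, hone⟩, hinv⟩ :=
    amenable_of_eventually_separated_posdef_general hε hf2 hpd hnorm hev
  exact ⟨m, hpos, hone, hinv⟩
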